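/- For Re(s) > 1, one has ζ(s)·L(s,χ₄) = (1/4) ∑_{n=1}^∞ r_n n^{-s}, where r_n = #{(a,b) ∈ ℤ² : a²+b² = n} and L(s,χ₄) = ∑_{k=0}^∞ (-1)^k/(2k+1)^s. -/

import Mathlib

/-!
`r_n` is the number of Gaussian integers of norm `n`, and on the level of coefficients the identity
is Jacobi's theorem `r_n = 4 ∑_{d ∣ n} χ₄(d)`. Both `a_n = r_n` and `a_n = ∑_{d ∣ n} χ₄(d)` satisfy
`a_{pn} + χ₄(p) a_{n/p} = (1 + χ₄(p)) a_n` at every prime `p`, where `a_{n/p} = 0` if `p ∤ n`, and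
this determines the sequence up to the factor `a_1`. For `r_n` the relation counts the Gaussian
integers of norm `pn` by the primes above `p` dividing them: for `p = w * star w` split, those
divisible by `w` and those divisible by `star w` are two copies of the set of norm `n`, which meet
in a copy of the set of norm `n / p`; for `p = 2` the two copies coincide, and for `p` inert only
the multiples of `p` remain.
-/

open Finset ZMod

section HeckeRelation

variable {R : Type*}

/-- The Hecke relation `a_{pn} + χ(p) a_{n/p} = (1 + χ(p)) a_n` at all primes `p`, with the usual
convention `a_{n/p} = 0` for `p ∤ n`. For completely multiplicative `χ` it characterizes, away from
`n = 0`, the multiples of the divisor sum of `χ`, the coefficients of `ζ(s) L(s,χ)`. -/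
def HeckeRelation [CommSemiring R] (χ a : ℕ → R) : Prop :=
  ∀ p : ℕ, p.Prime → ∀ n : ℕ,
    a (p * n) + χ p * (if p ∣ n then a (n / p) else 0) = (1 + χ p) * a n

lemma sum_divisors_filter_dvd [CommSemiring R] (χ : ℕ →* R) {m : ℕ} (hm : m ≠ 0) (n : ℕ) :
    ∑ d ∈ n.divisors with m ∣ d, χ d =
      χ m * (if m ∣ n then ∑ d ∈ (n / m).divisors, χ d else 0) := by
  split_ifs with h
  · obtain ⟨k, rfl⟩ := h
    have hfilter : {d ∈ (m * k).divisors | m ∣ d} = k.divisors.image (m * ·) := by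
      ext d
      simp only [mem_filter, mem_image, Nat.mem_divisors]
      constructor
      · rintro ⟨⟨hd, hmk⟩, e, rfl⟩
        exact ⟨e, ⟨(mul_dvd_mul_iff_left hm).mp hd, right_ne_zero_of_mul hmk⟩, rfl⟩
      · rintro ⟨e, ⟨he, hk⟩, rfl⟩
        exact ⟨⟨mul_dvd_mul_left m he, mul_ne_zero hm hk⟩, dvd_mul_right m e⟩
    simp only [hfilter, sum_image (mul_right_injective₀ hm).injOn, map_mul, mul_sum,
      Nat.mul_div_cancel_left k (Nat.pos_of_ne_zero hm)]
  · rw [filter_false_of_mem fun d hd hmd ↦ h (hmd.trans (Nat.dvd_of_mem_divisors hd)), sum_empty,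
      mul_zero]

lemma divisors_prime_mul_filter_not_dvd {p : ℕ} (hp : p.Prime) (n : ℕ) :
    {d ∈ (p * n).divisors | ¬ p ∣ d} = {d ∈ n.divisors | ¬ p ∣ d} := by
  ext d
  simp only [mem_filter, Nat.mem_divisors, mul_ne_zero_iff, hp.ne_zero, ne_eq, not_false_eq_true,
    true_and]
  refine and_congr_left fun hpd ↦ and_congr_left fun _ ↦ ?_
  exact ((hp.coprime_iff_not_dvd.mpr hpd).symm).dvd_mul_left

theorem heckeRelation_sum_divisors [CommSemiring R] (χ : ℕ →* R) :
    HeckeRelation χ fun n ↦ ∑ d ∈ n.divisors, χ d := by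
  intro p hp n
  have hmultiples : ∑ d ∈ (p * n).divisors with p ∣ d, χ d = χ p * ∑ d ∈ n.divisors, χ d := by
    rw [sum_divisors_filter_dvd χ hp.ne_zero, if_pos (dvd_mul_right p n),
      Nat.mul_div_cancel_left n hp.pos]
  have hsplit : ∑ d ∈ (p * n).divisors, χ d =
      χ p * ∑ d ∈ n.divisors, χ d + ∑ d ∈ n.divisors with ¬ p ∣ d, χ d := by
    rw [← sum_filter_add_sum_filter_not _ (p ∣ ·), hmultiples, divisors_prime_mul_filter_not_dvd hp]
  dsimp only
  rw [← sum_divisors_filter_dvd χ hp.ne_zero, hsplit, add_assoc,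
    sum_filter_not_add_sum_filter]
  ring

theorem HeckeRelation.eq_mul_sum_divisors [CommRing R] {χ : ℕ →* R} {a : ℕ → R}
    (ha : HeckeRelation χ a) {n : ℕ} (hn : n ≠ 0) : a n = a 1 * ∑ d ∈ n.divisors, χ d := by
  induction n using Nat.strong_induction_on with
  | _ n ih =>
    rcases eq_or_ne n 1 with rfl | hn1
    · simp
    obtain ⟨p, hp, m, rfl⟩ := Nat.exists_prime_and_dvd hn1
    have hm : m ≠ 0 := right_ne_zero_of_mul hn
    have hlt : m < p * m := lt_mul_left (Nat.pos_of_ne_zero hm) hp.one_lt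
    have hdiv : (if p ∣ m then a (m / p) else 0) =
        a 1 * (if p ∣ m then ∑ d ∈ (m / p).divisors, χ d else 0) := by
      split_ifs with h
      · exact ih (m / p) ((Nat.div_le_self m p).trans_lt hlt)
          ((Nat.div_ne_zero_iff_of_dvd h).mpr ⟨hm, hp.ne_zero⟩)
      · rw [mul_zero]
    have hpm := ha p hp m
    rw [hdiv, ih m hlt hm] at hpm
    linear_combination hpm - a 1 * heckeRelation_sum_divisors χ p hp m

end HeckeRelation

section Star

variable {R : Type*} [CommSemiring R] [StarRing R] {a b : R}

lemma dvd_star_iff_star_dvd : a ∣ star b ↔ star a ∣ b := by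
  simpa using (map_dvd_iff (starRingAut (R := R)) (a := a) (b := star b)).symm

lemma prime_star (ha : Prime a) : Prime (star a) :=
  (MulEquiv.prime_iff (starRingAut (R := R))).mpr ha

end Star

section NormFiber

variable {d : ℤ} {w z : ℤ√d}

/-- The set of elements of `ℤ√d` of norm `n`. Its cardinality, for `d = -1`, is the number of
representations of `n` as a sum of two squares. -/
def normFiber (d n : ℤ) : Set (ℤ√d) := {z | z.norm = n}

lemma mem_normFiber {n : ℤ} : z ∈ normFiber d n ↔ z.norm = n := Iff.rfl

lemma finite_normFiber (hd : d < 0) (n : ℤ) : (normFiber d n).Finite := by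
  have hinj : Function.Injective fun z : ℤ√d ↦ (z.re, z.im) := fun _ _ h ↦
    Zsqrtd.ext (congrArg Prod.fst h) (congrArg Prod.snd h)
  refine (((Set.finite_Icc (-n) n).prod (Set.finite_Icc (-n) n)).preimage hinj.injOn).subset
    fun z hz ↦ ?_
  rw [mem_normFiber, Zsqrtd.norm_def] at hz
  have habs (a : ℤ) : |a| ≤ a ^ 2 := a.abs_eq_natAbs ▸ a.natAbs_le_self_sq
  have hre : z.re ^ 2 ≤ n := by nlinarith [sq_nonneg z.im]
  have him : z.im ^ 2 ≤ n := by nlinarith [sq_nonneg z.re, sq_nonneg z.im]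
  exact ⟨abs_le.mp ((habs z.re).trans hre),
    abs_le.mp ((habs z.im).trans him)⟩

lemma mul_right_injective_of_norm_ne_zero (hw : w.norm ≠ 0) :
    Function.Injective (w * ·) := by
  intro a b (hab : w * a = w * b)
  refine Zsqrtd.eq_of_smul_eq_smul_left hw ?_
  rw [Zsqrtd.norm_eq_mul_conj, mul_comm w, mul_assoc, hab, mul_assoc]

lemma ncard_normFiber_sep_dvd (hw : w.norm ≠ 0) (n : ℤ) :
    {z ∈ normFiber d (w.norm * n) | w ∣ z}.ncard = (normFiber d n).ncard := by
  rw [← Set.ncard_image_of_injective (normFiber d n) (mul_right_injective_of_norm_ne_zero hw)]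
  congr 1
  refine Set.Subset.antisymm ?_ ?_
  · rintro _ ⟨hz, u, rfl⟩
    rw [mem_normFiber, Zsqrtd.norm_mul] at hz
    exact ⟨u, mul_left_cancel₀ hw hz, rfl⟩
  · rintro _ ⟨u, hu, rfl⟩
    exact ⟨by rw [mem_normFiber, Zsqrtd.norm_mul, mem_normFiber.mp hu], dvd_mul_right w u⟩

lemma ncard_normFiber_sep_intCast_dvd {p : ℤ} (hp : p ≠ 0) (n : ℤ) :
    {z ∈ normFiber d (p * n) | (p : ℤ√d) ∣ z}.ncard =
      if p ∣ n then (normFiber d (n / p)).ncard else 0 := by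
  split_ifs with h
  · obtain ⟨m, rfl⟩ := h
    have hnorm : (p : ℤ√d).norm ≠ 0 := by
      rw [Zsqrtd.norm_intCast]
      exact mul_ne_zero hp hp
    rw [Int.mul_ediv_cancel_left m hp, ← ncard_normFiber_sep_dvd hnorm, Zsqrtd.norm_intCast,
      mul_assoc]
  · convert Set.ncard_empty (ℤ√d)
    refine Set.eq_empty_of_forall_notMem ?_
    rintro _ ⟨hz, u, rfl⟩
    rw [mem_normFiber, Zsqrtd.norm_mul, Zsqrtd.norm_intCast, mul_assoc] at hz
    exact h ⟨u.norm, (mul_left_cancel₀ hp hz).symm⟩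

lemma irreducible_of_prime_norm (hw : Prime w.norm) : Irreducible w where
  not_isUnit h := hw.not_isUnit (w.isUnit_iff_norm_isUnit.mp h)
  isUnit_or_isUnit a b hab := by
    rw [a.isUnit_iff_norm_isUnit, b.isUnit_iff_norm_isUnit]
    exact hw.irreducible.isUnit_or_isUnit (by rw [hab, Zsqrtd.norm_mul])

lemma dvd_intCast_norm (w : ℤ√d) : w ∣ (w.norm : ℤ√d) := ⟨star w, w.norm_eq_mul_conj⟩

lemma dvd_or_star_dvd_of_dvd_norm (hw : Prime w) (h : w ∣ (z.norm : ℤ√d)) :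
    w ∣ z ∨ star w ∣ z := by
  rw [Zsqrtd.norm_eq_mul_conj] at h
  exact (hw.dvd_or_dvd h).imp_right dvd_star_iff_star_dvd.mp

lemma dvd_or_star_dvd_of_mem_normFiber {p n : ℤ} (hw : Prime w) (hwp : w ∣ (p : ℤ√d))
    (hz : z ∈ normFiber d (p * n)) : w ∣ z ∨ star w ∣ z := by
  refine dvd_or_star_dvd_of_dvd_norm hw ?_
  rw [mem_normFiber.mp hz, Int.cast_mul]
  exact hwp.mul_right _

lemma not_star_dvd_self (hw : Prime w.norm) (h2d : ¬ w.norm ∣ 2 * d) : ¬ star w ∣ w := by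
  intro h
  have htrace : star w ∣ ((2 * w.re : ℤ) : ℤ√d) := by
    have : ((2 * w.re : ℤ) : ℤ√d) = w + star w := by ext <;> simp [two_mul]
    exact this ▸ dvd_add h dvd_rfl
  have hnorm : w.norm ∣ (2 * w.re) ^ 2 := by
    have : (star w).norm ∣ ((2 * w.re : ℤ) : ℤ√d).norm := map_dvd Zsqrtd.normMonoidHom htrace
    rwa [Zsqrtd.norm_conj, Zsqrtd.norm_intCast, ← sq] at this
  have hre : w.norm ∣ w.re :=
    (hw.dvd_or_dvd (hw.dvd_of_dvd_pow hnorm)).resolve_left fun h ↦ h2d (h.mul_right d)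
  have him : w.norm ∣ w.im := by
    have hdim : w.norm ∣ d * w.im ^ 2 := by
      have : d * w.im ^ 2 = w.re ^ 2 - w.norm := by rw [Zsqrtd.norm_def]; ring
      exact this ▸ dvd_sub (dvd_pow hre two_ne_zero) dvd_rfl
    exact hw.dvd_of_dvd_pow ((hw.dvd_or_dvd hdim).resolve_left fun h ↦ h2d (h.mul_left 2))
  have hsq : w.norm * w.norm ∣ w.norm * 1 := by
    rw [mul_one]
    nth_rewrite 3 [Zsqrtd.norm_def]
    exact dvd_sub (mul_dvd_mul hre hre) (mul_dvd_mul (him.mul_left d) him)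
  exact hw.not_dvd_one ((mul_dvd_mul_iff_left hw.ne_zero).mp hsq)

theorem ncard_normFiber_mul_of_inert {p : ℤ} (hp : Prime (p : ℤ√d)) (n : ℤ) :
    (normFiber d (p * n)).ncard = if p ∣ n then (normFiber d (n / p)).ncard else 0 := by
  have hp0 : p ≠ 0 := by
    rintro rfl
    exact hp.ne_zero Int.cast_zero
  rw [← ncard_normFiber_sep_intCast_dvd hp0]
  congr 1
  refine (Set.sep_eq_self_iff_mem_true.mpr fun z hz ↦ ?_).symm
  simpa using dvd_or_star_dvd_of_mem_normFiber hp dvd_rfl hz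

theorem ncard_normFiber_mul_of_ramified (hw : Prime w) (hstar : w ∣ star w) (hnorm : w.norm ≠ 0)
    (n : ℤ) : (normFiber d (w.norm * n)).ncard = (normFiber d n).ncard := by
  rw [← ncard_normFiber_sep_dvd hnorm n]
  congr 1
  refine (Set.sep_eq_self_iff_mem_true.mpr fun z hz ↦ ?_).symm
  exact (dvd_or_star_dvd_of_mem_normFiber hw (dvd_intCast_norm w) hz).elim id hstar.trans

lemma dvd_and_star_dvd_iff (hw : Prime w) (hstar : ¬ star w ∣ w) :
    w ∣ z ∧ star w ∣ z ↔ (w.norm : ℤ√d) ∣ z := by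
  rw [Zsqrtd.norm_eq_mul_conj]
  refine ⟨?_, fun h ↦ ⟨(dvd_mul_right _ _).trans h, (dvd_mul_left _ _).trans h⟩⟩
  rintro ⟨⟨u, rfl⟩, h⟩
  exact mul_dvd_mul_left w (((prime_star hw).dvd_or_dvd h).resolve_left hstar)

theorem ncard_normFiber_mul_of_split (hd : d < 0) (hw : Prime w) (hstar : ¬ star w ∣ w) (n : ℤ) :
    (normFiber d (w.norm * n)).ncard +
      (if w.norm ∣ n then (normFiber d (n / w.norm)).ncard else 0) = 2 * (normFiber d n).ncard := by
  have hnorm : w.norm ≠ 0 := (Zsqrtd.norm_eq_zero_iff hd w).not.mpr hw.ne_zero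
  set A := {z ∈ normFiber d (w.norm * n) | w ∣ z} with hA
  set B := {z ∈ normFiber d (w.norm * n) | star w ∣ z} with hB
  have hunion : A ∪ B = normFiber d (w.norm * n) := by
    rw [hA, hB, ← Set.sep_or]
    exact Set.sep_eq_self_iff_mem_true.mpr fun z hz ↦
      dvd_or_star_dvd_of_mem_normFiber hw (dvd_intCast_norm w) hz
  have hinter : A ∩ B = {z ∈ normFiber d (w.norm * n) | (w.norm : ℤ√d) ∣ z} := by
    simp only [hA, hB, ← Set.sep_and, dvd_and_star_dvd_iff hw hstar]
  have hcardA : A.ncard = (normFiber d n).ncard := ncard_normFiber_sep_dvd hnorm n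
  have hcardB : B.ncard = (normFiber d n).ncard := by
    rw [hB, ← w.norm_conj, ncard_normFiber_sep_dvd (by rwa [Zsqrtd.norm_conj])]
  have hfin := finite_normFiber hd (w.norm * n)
  rw [← ncard_normFiber_sep_intCast_dvd hnorm, ← hinter, ← hunion,
    Set.ncard_union_add_ncard_inter A B (hfin.subset (Set.sep_subset _ _))
      (hfin.subset (Set.sep_subset _ _)), hcardA, hcardB, two_mul]

end NormFiber

section GaussianInt

lemma norm_gaussianInt (z : GaussianInt) : z.norm = z.re ^ 2 + z.im ^ 2 := by
  rw [Zsqrtd.norm_def]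
  ring

lemma natCard_sq_add_sq_eq_ncard_normFiber (n : ℤ) :
    Nat.card {p : ℤ × ℤ // p.1 ^ 2 + p.2 ^ 2 = n} = (normFiber (-1) n).ncard := by
  rw [← Nat.card_coe_set_eq]
  exact Nat.card_congr
    { toFun := fun p ↦ ⟨⟨p.1.1, p.1.2⟩, (norm_gaussianInt _).trans p.2⟩
      invFun := fun z ↦ ⟨(z.1.re, z.1.im), (norm_gaussianInt _).symm.trans z.2⟩
      left_inv := fun _ ↦ rfl
      right_inv := fun _ ↦ rfl }

lemma ncard_normFiber_one : (normFiber (-1) 1).ncard = 4 := by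
  have hunits : normFiber (-1) 1 =
      (({⟨1, 0⟩, ⟨-1, 0⟩, ⟨0, 1⟩, ⟨0, -1⟩} : Finset GaussianInt) : Set GaussianInt) := by
    ext ⟨a, b⟩
    simp only [mem_normFiber, norm_gaussianInt, coe_insert, coe_singleton, Set.mem_insert_iff,
      Set.mem_singleton_iff, Zsqrtd.ext_iff]
    constructor
    · intro h
      obtain ⟨ha, ha'⟩ : -1 ≤ a ∧ a ≤ 1 := by constructor <;> nlinarith [sq_nonneg b]
      obtain ⟨hb, hb'⟩ : -1 ≤ b ∧ b ≤ 1 := by constructor <;> nlinarith [sq_nonneg a]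
      interval_cases a <;> interval_cases b <;> simp_all
    · rintro (⟨rfl, rfl⟩ | ⟨rfl, rfl⟩ | ⟨rfl, rfl⟩ | ⟨rfl, rfl⟩) <;> norm_num
  rw [hunits, Set.ncard_coe_finset]
  decide

lemma ncard_normFiber_two_mul (n : ℤ) :
    (normFiber (-1) (2 * n)).ncard = (normFiber (-1) n).ncard := by
  let w : GaussianInt := ⟨1, 1⟩
  have hnorm : w.norm = 2 := rfl
  have hw : Prime w := (irreducible_of_prime_norm (hnorm ▸ Int.prime_two)).prime
  have hstar : w ∣ star w := ⟨⟨0, -1⟩, rfl⟩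
  simpa only [hnorm] using ncard_normFiber_mul_of_ramified hw hstar (hnorm ▸ two_ne_zero) n

lemma ncard_normFiber_prime_mul_of_mod_four_eq_one {p : ℕ} (hp : p.Prime) (hp1 : p % 4 = 1)
    (n : ℤ) :
    (normFiber (-1) (p * n)).ncard + (if (p : ℤ) ∣ n then (normFiber (-1) (n / p)).ncard else 0) =
      2 * (normFiber (-1) n).ncard := by
  have := Fact.mk hp
  obtain ⟨a, b, hab⟩ := Nat.Prime.sq_add_sq (p := p) (by lia)
  let w : GaussianInt := ⟨a, b⟩
  have hnorm : w.norm = p := by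
    rw [norm_gaussianInt]
    dsimp only [w]
    exact_mod_cast hab
  have hprime : Prime w.norm := hnorm ▸ Nat.prime_iff_prime_int.mp hp
  have hodd : ¬ w.norm ∣ 2 * -1 := by
    rw [mul_neg_one, dvd_neg, hnorm]
    norm_cast
    rw [Nat.prime_dvd_prime_iff_eq hp Nat.prime_two]
    lia
  simpa only [hnorm] using ncard_normFiber_mul_of_split (by norm_num)
    (irreducible_of_prime_norm hprime).prime (not_star_dvd_self hprime hodd) n

theorem heckeRelation_ncard_normFiber :
    HeckeRelation (fun n ↦ χ₄ n) fun n ↦ ((normFiber (-1) n).ncard : ℤ) := by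
  intro p hp n
  have hdvd : p ∣ n ↔ (p : ℤ) ∣ n := Int.natCast_dvd_natCast.symm
  simp only [hdvd, Nat.cast_mul, Int.natCast_div]
  rcases hp.eq_two_or_odd with rfl | hodd
  · have hχ : χ₄ ((2 : ℕ) : ZMod 4) = 0 := by decide
    rw [hχ, Nat.cast_ofNat, ncard_normFiber_two_mul]
    ring
  rcases Nat.odd_mod_four_iff.mp hodd with hp1 | hp3
  · rw [χ₄_nat_one_mod_four hp1]
    have hsplit := ncard_normFiber_prime_mul_of_mod_four_eq_one hp hp1 n
    zify at hsplit
    linear_combination hsplit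
  · have := Fact.mk hp
    have hprime : Prime ((p : ℤ) : GaussianInt) := by
      exact_mod_cast GaussianInt.prime_of_nat_prime_of_mod_four_eq_three p hp3
    rw [χ₄_nat_three_mod_four hp3, ncard_normFiber_mul_of_inert hprime]
    push_cast
    ring

theorem natCard_sq_add_sq_eq_four_mul_sum_divisors {n : ℕ} (hn : n ≠ 0) :
    (Nat.card {p : ℤ × ℤ // p.1 ^ 2 + p.2 ^ 2 = (n : ℤ)} : ℤ) = 4 * ∑ d ∈ n.divisors, χ₄ d := by
  have h := HeckeRelation.eq_mul_sum_divisors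
    (χ := (χ₄ : ZMod 4 →* ℤ).comp (Nat.castRingHom (ZMod 4) : ℕ →* ZMod 4))
    heckeRelation_ncard_normFiber hn
  rw [Nat.cast_one, ncard_normFiber_one] at h
  rw [natCard_sq_add_sq_eq_ncard_normFiber]
  exact h

end GaussianInt

section LSeries

variable {s : ℂ}

lemma LSeries_eq_tsum_comp {ι : Type*} {g : ι → ℕ} (hg : g.Injective) (hg0 : ∀ i, g i ≠ 0)
    {f : ℕ → ℂ} (hf : ∀ n ≠ 0, n ∉ Set.range g → f n = 0) (s : ℂ) :
    LSeries f s = ∑' i, f (g i) / (g i : ℂ) ^ s := by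
  rw [LSeries, ← hg.tsum_eq]
  · exact tsum_congr fun i ↦ LSeries.term_of_ne_zero (hg0 i) f s
  · refine Function.support_subset_iff'.mpr fun n hn ↦ ?_
    rcases eq_or_ne n 0 with rfl | h0
    · exact LSeries.term_zero f s
    · rw [LSeries.term_of_ne_zero h0, hf n h0 hn, zero_div]

lemma LSeries_eq_tsum_pnat (f : ℕ → ℂ) (s : ℂ) :
    LSeries f s = ∑' n : ℕ+, f n / (n : ℂ) ^ s :=
  LSeries_eq_tsum_comp PNat.coe_injective PNat.ne_zero
    (fun n h0 hn ↦ absurd ⟨⟨n, Nat.pos_of_ne_zero h0⟩, rfl⟩ hn) s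

lemma LSeries_χ₄ (s : ℂ) :
    LSeries (fun n ↦ (χ₄ n : ℂ)) s = ∑' k : ℕ, (-1 : ℂ) ^ k / ((2 * k + 1 : ℕ) : ℂ) ^ s := by
  have hinj : Function.Injective fun k : ℕ ↦ 2 * k + 1 := fun a b h ↦ by simpa using h
  have heven (n : ℕ) (_ : n ≠ 0) (hn : n ∉ Set.range fun k : ℕ ↦ 2 * k + 1) : (χ₄ n : ℂ) = 0 := by
    have hmod : n % 2 = 0 := by
      by_contra h
      exact hn ⟨n / 2, by grind⟩
    rw [χ₄_nat_eq_if_mod_four, if_pos hmod, Int.cast_zero]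
  rw [LSeries_eq_tsum_comp hinj (fun k ↦ by lia) heven]
  refine tsum_congr fun k ↦ ?_
  rw [χ₄_eq_neg_one_pow (by lia), show (2 * k + 1) / 2 = k by lia]
  simp

lemma LSeriesSummable_χ₄ (hs : 1 < s.re) : LSeriesSummable (fun n ↦ (χ₄ n : ℂ)) s :=
  DirichletCharacter.LSeriesSummable_of_one_lt_re (χ₄.ringHomComp (Int.castRingHom ℂ)) hs

lemma riemannZeta_mul_LSeries (hs : 1 < s.re) {f : ℕ → ℂ} (hf : LSeriesSummable f s) :
    riemannZeta s * LSeries f s = LSeries (fun n ↦ ∑ d ∈ n.divisors, f d) s := by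
  rw [← LSeries_one_eq_riemannZeta hs, ← LSeries_convolution' (LSeriesSummable_one_iff.mpr hs) hf]
  congr 1
  ext n
  simp only [LSeries.convolution_def, Pi.one_apply, one_mul]
  exact Nat.sum_divisorsAntidiagonal' fun _ b ↦ f b

end LSeries

/-- For `Re s > 1`, `ζ(s) L(s,χ₄) = (1/4) ∑_{n≥1} r_n n^{-s}`, where
`r_n = #{(a,b) ∈ ℤ² : a² + b² = n}` and `L(s,χ₄) = ∑_{k≥0} (-1)^k/(2k+1)^s`. -/
theorem stmt14 (s : ℂ) (hs : 1 < s.re) :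
    riemannZeta s * ∑' k : ℕ, (-1 : ℂ) ^ k / ((2 * k + 1 : ℕ) : ℂ) ^ s
      = (1 / 4) * ∑' n : ℕ+,
          ((Nat.card {p : ℤ × ℤ // p.1 ^ 2 + p.2 ^ 2 = (n : ℤ)}) : ℂ) / (n : ℂ) ^ s := by
  rw [← LSeries_χ₄, riemannZeta_mul_LSeries hs (LSeriesSummable_χ₄ hs), LSeries_eq_tsum_pnat,
    ← tsum_mul_left]
  refine tsum_congr fun n ↦ ?_
  have hjacobi : (Nat.card {p : ℤ × ℤ // p.1 ^ 2 + p.2 ^ 2 = (n : ℤ)} : ℂ) =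
      4 * ∑ d ∈ (n : ℕ).divisors, (χ₄ d : ℂ) := by
    exact_mod_cast natCard_sq_add_sq_eq_four_mul_sum_divisors n.ne_zero
  rw [hjacobi]
  ring
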